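/- arXiv:1805.07430 — 2 statements merged into one kernel-verified Lean document; each statement's English description precedes it below -/
import Mathlib

section
/- There is an absolute constant C > 0 such that the following holds. Let the BARRONS iterates x_1, …, x_T be as in the context with parameters 0 < β ≤ 1/2 and 0 < η ≤ 1. Then for any u ∈ Δ̄_N, Σ_{t=1}^T ( D_{ψ_t}(u, x_t) − D_{ψ_t}(u, x_{t+1}) − (β/2)·⟨∇_t, x_t − u⟩² ) ≤ C·N·ln T/η − (1/(8·η·ln T))·Σ_{i=1}^N max_{t∈[T]} u_i/x_{t,i}. -/
open Finset

/-- The iterated real supremum is bounded by any nonnegative bound on its terms. -/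
lemma biSup_finset_le {s : Finset ℕ} {f : ℕ → ℝ} {b : ℝ} (hb : 0 ≤ b)
    (h : ∀ t ∈ s, f t ≤ b) : ⨆ t ∈ s, f t ≤ b :=
  Real.iSup_le (fun t => Real.iSup_le (fun ht => h t ht) hb) hb

lemma le_biSup_finset {s : Finset ℕ} {f : ℕ → ℝ} {t : ℕ} (ht : t ∈ s) :
    f t ≤ ⨆ t ∈ s, f t := by
  have hbdd : BddAbove (Set.range fun t => ⨆ _ : t ∈ s, f t) := by
    refine ⟨∑ t ∈ s, |f t|, ?_⟩
    rintro _ ⟨k, rfl⟩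
    refine Real.iSup_le (fun hk => ?_) (sum_nonneg fun _ _ => abs_nonneg _)
    exact (le_abs_self _).trans (single_le_sum (f := fun t => |f t|)
      (fun _ _ => abs_nonneg _) hk)
  refine le_ciSup_of_le hbdd t ?_
  rw [ciSup_pos ht]

lemma log_barrier_divergence_nonneg {y : ℝ} (hy : 0 < y) : 0 ≤ y - 1 - Real.log y := by
  linarith [Real.log_le_sub_one_of_pos hy]

lemma log_le_half {y : ℝ} (hy : 0 < y) : Real.log y ≤ y / 2 := by
  have h := Real.log_le_sub_one_of_pos (half_pos hy)
  rw [Real.log_div hy.ne' two_ne_zero] at h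
  linarith [Real.log_two_lt_d9]

/-- A decrease of the inverse learning rate from `exp (-m)` to `exp (-m')` pays for the growth
of the inverse iterate from `exp (m * L)` to `exp (m' * L)`. -/
lemma inverse_rate_decrease {L w m m' : ℝ} (hL : 0 < L) (hw : 0 < w) (hm : m ≤ m')
    (hm' : m' ≤ 1) :
    (Real.exp (-m') - Real.exp (-m)) *
        (w * Real.exp (m' * L) - 1 - Real.log (w * Real.exp (m' * L)))
      ≤ -(1 / (8 * L)) * (w * (Real.exp (m' * L) - Real.exp (m * L))) + (m' - m) / 4 := by
  set y := w * Real.exp (m' * L) with hy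
  have hy0 : 0 < y := by positivity
  have hexp : (m' - m) / 4 ≤ Real.exp (-m) - Real.exp (-m') := by
    have h1 : Real.exp (-m) = Real.exp (-m') * Real.exp (m' - m) := by
      rw [← Real.exp_add]; ring_nf
    have h2 : (1 : ℝ) / 4 ≤ Real.exp (-m') := by
      have h3 : Real.exp (-1) ≤ Real.exp (-m') := Real.exp_le_exp.2 (by linarith)
      linarith [Real.exp_neg_one_gt_d9]
    rw [h1]
    nlinarith [Real.add_one_le_exp (m' - m)]
  have hdiff : w * (Real.exp (m' * L) - Real.exp (m * L))
      = y * (1 - Real.exp (-((m' - m) * L))) := by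
    have h1 : Real.exp (m * L) = Real.exp (m' * L) * Real.exp (-((m' - m) * L)) := by
      rw [← Real.exp_add]; ring_nf
    rw [h1, hy]; ring
  have hstep : (1 / (8 * L)) * (y * (1 - Real.exp (-((m' - m) * L)))) ≤ y * (m' - m) / 8 := by
    have h1 := Real.add_one_le_exp (-((m' - m) * L))
    calc (1 / (8 * L)) * (y * (1 - Real.exp (-((m' - m) * L))))
        ≤ (1 / (8 * L)) * (y * ((m' - m) * L)) := by gcongr; linarith
      _ = y * (m' - m) / 8 := by field_simp
  have hlog := log_le_half hy0
  have hprod := mul_le_mul_of_nonneg_right hexp (log_barrier_divergence_nonneg hy0)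
  rw [hdiff]
  nlinarith [mul_nonneg (sub_nonneg.2 hm) (sub_nonneg.2 hlog)]

/-- Summation by parts for one coordinate of the log-barrier with increasing learning rates. -/
lemma log_barrier_coordinate_sum_le {T : ℕ} {L η w : ℝ} (hT : 1 ≤ T) (hL : 0 < L) (hη : 0 < η)
    (hw : 0 < w) (f M c h : ℕ → ℝ)
    (hf1 : f 1 = 0) (hf : ∀ t ∈ Icc 1 T, f t ≤ 1)
    (hM : ∀ n, M n = ⨆ s ∈ Icc 1 n, f s)
    (hc : ∀ t ∈ Icc 1 T, c t = 1 / (η * Real.exp (M t)))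
    (hh : ∀ t ∈ Icc 1 T,
      h t = w * Real.exp (f t * L) - 1 - Real.log (w * Real.exp (f t * L)))
    (hhT : 0 ≤ h (T + 1)) :
    ∑ t ∈ Icc 1 T, c t * (h t - h (t + 1))
      ≤ (1 / η) * (w - 1 - Real.log w + w / (8 * L) + 1 / 4)
        - (1 / (8 * η * L)) * (w * Real.exp (M T * L)) := by
  have hM1 : M 1 = 0 := by
    rw [hM]
    refine le_antisymm (biSup_finset_le le_rfl fun t ht => ?_) ?_
    · obtain rfl : t = 1 := by simpa using ht
      exact hf1.le
    · exact hf1.symm.le.trans (le_biSup_finset (by simp))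
  have hMle : ∀ n ≤ T, M n ≤ 1 := fun n hn => by
    rw [hM]
    refine biSup_finset_le zero_le_one fun t ht => hf t ?_
    simp only [mem_Icc] at ht ⊢
    omega
  have hc' : ∀ t ∈ Icc 1 T, c t = (1 / η) * Real.exp (-M t) := fun t ht => by
    rw [hc t ht, Real.exp_neg]; field_simp
  have hMnonneg : ∀ n, 1 ≤ n → 0 ≤ M n := fun n hn => by
    rw [hM, ← hf1]; exact le_biSup_finset (by simpa using hn)
  have hmono : ∀ n, 1 ≤ n → M n ≤ M (n + 1) := fun n hn => by
    rw [hM n]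
    refine biSup_finset_le (hMnonneg _ (by omega)) fun t ht => ?_
    rw [hM]
    refine le_biSup_finset ?_
    simp only [mem_Icc] at ht ⊢
    omega
  have hjump : ∀ n, 1 ≤ n → M (n + 1) = M n ∨ M (n + 1) = f (n + 1) := fun n hn => by
    have hle : M (n + 1) ≤ max (M n) (f (n + 1)) := by
      rw [hM (n + 1)]
      refine biSup_finset_le (le_max_of_le_left (hMnonneg n hn)) fun t ht => ?_
      rcases (mem_Icc.1 ht).2.eq_or_lt with rfl | hlt
      · exact le_max_right _ _
      · refine le_max_of_le_left ?_
        rw [hM n]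
        exact le_biSup_finset (mem_Icc.2 ⟨(mem_Icc.1 ht).1, by omega⟩)
    rcases le_max_iff.1 hle with h1 | h1
    · exact Or.inl (le_antisymm h1 (hmono n hn))
    · refine Or.inr (le_antisymm h1 ?_)
      rw [hM (n + 1)]
      exact le_biSup_finset (by simp)
  have key : ∀ n, 1 ≤ n → n ≤ T → ∑ t ∈ Icc 1 n, c t * (h t - h (t + 1))
      ≤ (1 / η) * (w - 1 - Real.log w) - c n * h (n + 1)
        + (1 / η) * (-(1 / (8 * L)) * (w * (Real.exp (M n * L) - 1)) + M n / 4) := by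
    intro n hn
    induction n, hn using Nat.le_induction with
    | base =>
      intro _
      have h1 : (1 : ℕ) ∈ Icc 1 T := by simpa using hT
      have hh1 := hh 1 h1
      have hc1 := hc' 1 h1
      simp only [hf1, hM1, zero_mul, Real.exp_zero, mul_one, neg_zero] at hh1 hc1
      simp only [Icc_self, sum_singleton, hM1, zero_mul, Real.exp_zero, hh1, hc1]
      exact le_of_eq (by ring)
    | succ n hn ih =>
      intro hnT
      have hn1 : n + 1 ∈ Icc 1 T := by simp only [mem_Icc]; omega
      have hstep : (c (n + 1) - c n) * h (n + 1) ≤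
          (1 / η) * (-(1 / (8 * L)) * (w * (Real.exp (M (n + 1) * L) - Real.exp (M n * L)))
            + (M (n + 1) - M n) / 4) := by
        rw [hc' _ hn1, hc' n (by simp only [mem_Icc]; omega)]
        rcases hjump n hn with h1 | h1
        · simp [h1]
        · have := inverse_rate_decrease hL hw (hmono n hn) (hMle _ hnT)
          rw [hh _ hn1, ← h1, ← mul_sub, mul_assoc]
          exact mul_le_mul_of_nonneg_left this (by positivity)
      rw [sum_Icc_succ_top (by omega)]
      have := ih (by omega)
      linarith
  refine (key T hT le_rfl).trans ?_
  have hcT : 0 ≤ c T * h (T + 1) := by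
    rw [hc' T (by simpa using hT)]
    positivity
  have hMT : (1 / η) * (M T / 4) ≤ (1 / η) * (1 / 4) := by
    have := hMle T le_rfl
    gcongr
  have e1 : (1 / (8 * η * L)) * (w * Real.exp (M T * L))
      = (1 / η) * ((1 / (8 * L)) * (w * Real.exp (M T * L))) := by
    field_simp
  have e2 : w / (8 * L) = (1 / (8 * L)) * w := by ring
  rw [e1, e2]
  linarith

/-- The quadratic form of a matrix. -/
def quadForm {N : ℕ} (B : Matrix (Fin N) (Fin N) ℝ) (v : Fin N → ℝ) : ℝ :=
  ∑ i, ∑ j, v i * B i j * v j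

lemma quadForm_bregman {N : ℕ} {B : Matrix (Fin N) (Fin N) ℝ} (hB : ∀ i j, B i j = B j i)
    (p q : Fin N → ℝ) :
    quadForm B p - quadForm B q - 2 * ∑ i, (∑ j, B i j * q j) * (p i - q i)
      = quadForm B fun i => p i - q i := by
  have hsymm : ∑ i, ∑ j, p i * B i j * q j = ∑ i, ∑ j, q i * B i j * p j := by
    rw [sum_comm]
    exact sum_congr rfl fun i _ => sum_congr rfl fun j _ => by rw [hB j i]; ring
  have e1 : ∑ i, (∑ j, B i j * q j) * (p i - q i)
      = ∑ i, ∑ j, p i * B i j * q j - quadForm B q := by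
    rw [quadForm, ← sum_sub_distrib]
    refine sum_congr rfl fun i _ => ?_
    rw [sum_mul, ← sum_sub_distrib]
    exact sum_congr rfl fun j _ => by ring
  have e2 : (quadForm B fun i => p i - q i) = quadForm B p - ∑ i, ∑ j, p i * B i j * q j
      - ∑ i, ∑ j, q i * B i j * p j + quadForm B q := by
    simp only [quadForm, ← sum_sub_distrib, ← sum_add_distrib]
    exact sum_congr rfl fun i _ => sum_congr rfl fun j _ => by ring
  rw [e1, e2, ← hsymm]; ring

lemma quadForm_add_outer {N : ℕ} {B B' : Matrix (Fin N) (Fin N) ℝ} {g : Fin N → ℝ}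
    (h : ∀ i j, B' i j = B i j + g i * g j) (v : Fin N → ℝ) :
    quadForm B' v = quadForm B v + (∑ i, g i * v i) ^ 2 := by
  rw [sq, sum_mul_sum]
  simp only [quadForm, ← sum_add_distrib]
  exact sum_congr rfl fun i _ => sum_congr rfl fun j _ => by rw [h]; ring

lemma quadForm_smul_one {N : ℕ} (a : ℝ) (v : Fin N → ℝ) :
    quadForm (a • (1 : Matrix (Fin N) (Fin N) ℝ)) v = a * ∑ i, v i ^ 2 := by
  rw [mul_sum]
  refine sum_congr rfl fun i _ => ?_
  rw [sum_eq_single i]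
  · simp; ring
  · intro j _ hj; simp [Matrix.one_apply_ne hj.symm]
  · simp

lemma sum_sq_sub_le_two {N : ℕ} {p q : Fin N → ℝ} (hp : ∀ i, 0 ≤ p i) (hq : ∀ i, 0 ≤ q i)
    (hp1 : ∑ i, p i = 1) (hq1 : ∑ i, q i = 1) : ∑ i, (p i - q i) ^ 2 ≤ 2 := by
  have hle : ∀ v : Fin N → ℝ, (∀ i, 0 ≤ v i) → ∑ i, v i = 1 → ∀ i, v i ≤ 1 :=
    fun v hv hv1 i => hv1 ▸ single_le_sum (fun j _ => hv j) (mem_univ i)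
  calc ∑ i, (p i - q i) ^ 2 ≤ ∑ i, (p i + q i) := sum_le_sum fun i _ => by
        nlinarith [hp i, hq i, hle p hp hp1 i, hle q hq hq1 i, mul_nonneg (hp i) (hq i)]
    _ = 2 := by rw [sum_add_distrib, hp1, hq1]; norm_num


/- STATEMENT 2: Lemma 5 of the paper (Bregman-divergence terms of BARRONS with a
   negative term from the log-barrier), with an absolute constant C. -/

theorem barrons_negative_term :
    ∃ C : ℝ, 0 < C ∧
    ∀ (N T : ℕ) (_hN : 2 ≤ N) (_hT : N < T)
      (β η : ℝ) (_hβ0 : 0 < β) (_hβ : β ≤ 1 / 2) (_hη0 : 0 < η) (_hη : η ≤ 1)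
      -- reward vectors: nonnegative with maximum coordinate equal to 1
      (r : ℕ → Fin N → ℝ)
      (_hr : ∀ t ∈ Finset.Icc 1 T, (∀ i, 0 ≤ r t i) ∧ (∃ i, r t i = 1) ∧ ∀ i, r t i ≤ 1)
      -- the iterates x_1, ..., x_{T+1}
      (x : ℕ → Fin N → ℝ)
      (_hx1 : ∀ i, x 1 i = 1 / N)
      (_hxmem : ∀ t ∈ Finset.Icc 1 (T + 1),
          (∀ i, 0 ≤ x t i) ∧ (∑ i, x t i) = 1 ∧ ∀ i, 1 / ((N : ℝ) * T) ≤ x t i)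
      -- the gradients ∇_t = -r_t / ⟨x_t, r_t⟩
      (grad : ℕ → Fin N → ℝ)
      (_hgrad : ∀ t i, grad t i = -(r t i) / ∑ j, x t j * r t j)
      -- the matrices A_t
      (A : ℕ → Matrix (Fin N) (Fin N) ℝ)
      (_hA0 : A 0 = (N : ℝ) • (1 : Matrix (Fin N) (Fin N) ℝ))
      (_hA : ∀ t ∈ Finset.Icc 1 T, ∀ i j, A t i j = A (t - 1) i j + grad t i * grad t j)
      -- the individual learning rates η_{t,i}
      (eta : ℕ → Fin N → ℝ)
      (_heta : ∀ t ∈ Finset.Icc 1 T, ∀ i,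
          eta t i = η * Real.exp (⨆ s ∈ Finset.Icc 1 t,
            Real.log (1 / ((N : ℝ) * x s i)) / Real.log T))
      -- the regularizer ψ_t, its gradient, and its Bregman divergence
      (psi : ℕ → (Fin N → ℝ) → ℝ)
      (_hpsi : ∀ t p, psi t p =
          β / 2 * ∑ i, ∑ j, p i * A t i j * p j + ∑ i, (1 / eta t i) * Real.log (1 / p i))
      (gpsi : ℕ → (Fin N → ℝ) → Fin N → ℝ)
      (_hgpsi : ∀ t p i, gpsi t p i = β * (∑ j, A t i j * p j) - (1 / eta t i) * (1 / p i))
      (D : ℕ → (Fin N → ℝ) → (Fin N → ℝ) → ℝ)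
      (_hD : ∀ t p q, D t p q = psi t p - psi t q - ∑ i, gpsi t q i * (p i - q i))
      -- x_{t+1} minimizes ⟨x, ∇_t⟩ + D_{ψ_t}(x, x_t) over Δ̄_N
      (_hmin : ∀ t ∈ Finset.Icc 1 T, ∀ y : Fin N → ℝ,
          ((∀ i, 0 ≤ y i) ∧ (∑ i, y i) = 1 ∧ ∀ i, 1 / ((N : ℝ) * T) ≤ y i) →
          (∑ i, x (t + 1) i * grad t i) + D t (x (t + 1)) (x t)
            ≤ (∑ i, y i * grad t i) + D t y (x t))
      -- the comparator u ∈ Δ̄_N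
      (u : Fin N → ℝ)
      (_hu : (∀ i, 0 ≤ u i) ∧ (∑ i, u i) = 1 ∧ ∀ i, 1 / ((N : ℝ) * T) ≤ u i),
      ∑ t ∈ Finset.Icc 1 T,
          (D t u (x t) - D t u (x (t + 1))
            - β / 2 * (∑ i, grad t i * (x t i - u i)) ^ 2)
      ≤ C * N * Real.log T / η
        - (1 / (8 * η * Real.log T)) * ∑ i, ⨆ t ∈ Finset.Icc 1 T, u i / x t i := by
  refine ⟨3, three_pos, ?_⟩
  intro N T hN hT β η hβ0 hβ hη0 hη r _ x hx1 hxmem grad _ A hA0 hA eta heta psi hpsi gpsi hgpsi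
    D hD _ u hu
  obtain ⟨hu0, hu1, hulb⟩ := hu
  have hN0 : (0 : ℝ) < N := by positivity
  have hT0 : (0 : ℝ) < T := by exact_mod_cast (by omega : 0 < T)
  have hL1 : 1 ≤ Real.log T := by
    rw [Real.le_log_iff_exp_le hT0]
    have : (3 : ℝ) ≤ T := by exact_mod_cast (by omega : 3 ≤ T)
    linarith [Real.exp_one_lt_d9]
  have hL0 : 0 < Real.log T := by linarith
  have hNT : 0 < 1 / ((N : ℝ) * T) := by positivity
  have hupos : ∀ i, 0 < u i := fun i => hNT.trans_le (hulb i)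
  have hxpos : ∀ t ∈ Icc 1 (T + 1), ∀ i, 0 < x t i := fun t ht i =>
    hNT.trans_le ((hxmem t ht).2.2 i)
  have hAle : ∀ t ≤ T, (∀ i j, A t i j = A t j i) ∧ ∀ v, 0 ≤ quadForm (A t) v := by
    intro t
    induction t with
    | zero =>
      intro _
      rw [hA0]
      refine ⟨fun i j => ?_, fun v => ?_⟩
      · simp [Matrix.one_apply, eq_comm]
      · rw [quadForm_smul_one]; positivity
    | succ t ih =>
      intro ht
      obtain ⟨hs, hq⟩ := ih (by omega)
      have hstep := hA (t + 1) (by simp only [mem_Icc]; omega)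
      rw [Nat.add_sub_cancel] at hstep
      refine ⟨fun i j => by rw [hstep, hstep, hs i j, mul_comm (grad _ i)], fun v => ?_⟩
      rw [quadForm_add_outer hstep]
      have := hq v
      positivity
  have hDeq : ∀ t ∈ Icc 1 T, ∀ q : Fin N → ℝ, (∀ i, 0 < q i) →
      D t u q = β / 2 * quadForm (A t) (fun i => u i - q i)
        + ∑ i, 1 / eta t i * (u i / q i - 1 - Real.log (u i / q i)) := by
    intro t ht q hq
    have e : ∑ i, gpsi t q i * (u i - q i)
        = β * ∑ i, (∑ j, A t i j * q j) * (u i - q i)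
          - ∑ i, 1 / eta t i * (u i / q i - 1) := by
      rw [mul_sum, ← sum_sub_distrib]
      refine sum_congr rfl fun i _ => ?_
      rw [hgpsi]
      have := (hq i).ne'
      field_simp
    have e' : ∑ i, 1 / eta t i * (u i / q i - 1 - Real.log (u i / q i))
        = ∑ i, 1 / eta t i * Real.log (1 / u i) - ∑ i, 1 / eta t i * Real.log (1 / q i)
          + ∑ i, 1 / eta t i * (u i / q i - 1) := by
      rw [← sum_sub_distrib, ← sum_add_distrib]
      refine sum_congr rfl fun i _ => ?_
      rw [Real.log_div (hupos i).ne' (hq i).ne', one_div (u i), one_div (q i), Real.log_inv,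
        Real.log_inv]
      ring
    rw [hD, hpsi, hpsi, e, e', ← quadForm_bregman (hAle t (mem_Icc.1 ht).2).1]
    simp only [quadForm]
    ring
  set Q : ℕ → ℝ := fun t => β / 2 * quadForm (A t) (fun i => u i - x (t + 1) i) with hQ
  set h : Fin N → ℕ → ℝ := fun i t => u i / x t i - 1 - Real.log (u i / x t i) with hh
  have hterm : ∀ t ∈ Icc 1 T, D t u (x t) - D t u (x (t + 1))
      - β / 2 * (∑ i, grad t i * (x t i - u i)) ^ 2
      = (Q (t - 1) - Q t) + ∑ i, 1 / eta t i * (h i t - h i (t + 1)) := by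
    intro t ht
    have ht' := mem_Icc.1 ht
    rw [hDeq t ht _ (hxpos t (by simp only [mem_Icc]; omega)),
      hDeq t ht _ (hxpos (t + 1) (by simp only [mem_Icc]; omega)),
      quadForm_add_outer (hA t ht) fun i => u i - x t i]
    have e : ∑ i, grad t i * (x t i - u i) = -∑ i, grad t i * (u i - x t i) := by
      rw [← sum_neg_distrib]
      exact sum_congr rfl fun i _ => by ring
    have e1 : t - 1 + 1 = t := by omega
    simp only [hQ, hh, mul_sub (1 / eta t _), sum_sub_distrib, e, e1]
    ring
  have htele : ∑ t ∈ Icc 1 T, (Q (t - 1) - Q t) = Q 0 - Q T := by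
    have : ∀ n, ∑ t ∈ Icc 1 n, (Q (t - 1) - Q t) = Q 0 - Q n := by
      intro n
      induction n with
      | zero => simp
      | succ n ih => rw [sum_Icc_succ_top (by omega), ih, Nat.add_sub_cancel]; ring
    exact this T
  have hQ0 : Q 0 ≤ N / 2 := by
    have hmem := hxmem 1 (by simp)
    have hsq := sum_sq_sub_le_two hu0 hmem.1 hu1 hmem.2.1
    simp only [hQ, hA0, quadForm_smul_one, zero_add]
    have h1 : (N : ℝ) * ∑ i, (u i - x 1 i) ^ 2 ≤ N * 2 := by gcongr
    have h2 : 0 ≤ (N : ℝ) * ∑ i, (u i - x 1 i) ^ 2 := by positivity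
    nlinarith
  have hQT : 0 ≤ Q T := mul_nonneg (by linarith) ((hAle T le_rfl).2 _)
  have hcoord : ∀ i, ∑ t ∈ Icc 1 T, 1 / eta t i * (h i t - h i (t + 1))
      ≤ (1 / η) * (2 * (N * u i) - 1 + Real.log T + 1 / 4)
        - (1 / (8 * η * Real.log T)) * ⨆ t ∈ Icc 1 T, u i / x t i := by
    intro i
    have hw : 0 < N * u i := mul_pos hN0 (hupos i)
    set f : ℕ → ℝ := fun s => Real.log (1 / ((N : ℝ) * x s i)) / Real.log T with hf
    have hratio : ∀ t ∈ Icc 1 T, u i / x t i = N * u i * Real.exp (f t * Real.log T) := by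
      intro t ht
      have hx := hxpos t (by simp only [mem_Icc] at ht ⊢; omega) i
      rw [hf, div_mul_cancel₀ _ hL0.ne', Real.exp_log (by positivity)]
      field_simp
    have hf1 : f 1 = 0 := by simp [hf, hx1, hN0.ne']
    have hfle : ∀ t ∈ Icc 1 T, f t ≤ 1 := by
      intro t ht
      have hmem : t ∈ Icc 1 (T + 1) := by simp only [mem_Icc] at ht ⊢; omega
      have hx := hxpos t hmem i
      have hlb := (hxmem t hmem).2.2 i
      rw [hf, div_le_one hL0]
      refine Real.log_le_log (by positivity) ?_
      rw [div_le_iff₀ (by positivity)] at hlb ⊢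
      linarith
    have hlast := hxpos (T + 1) (by simp) i
    have hmain := log_barrier_coordinate_sum_le (by omega) hL0 hη0 hw f
      (fun n => ⨆ s ∈ Icc 1 n, f s) (fun t => 1 / eta t i) (h i) hf1 hfle (fun _ => rfl)
      (fun t ht => by simp only [heta t ht i, hf])
      (fun t ht => by simp only [hh, hratio t ht])
      (log_barrier_divergence_nonneg (div_pos (hupos i) hlast))
    have hsup : ⨆ t ∈ Icc 1 T, u i / x t i
        ≤ N * u i * Real.exp ((⨆ s ∈ Icc 1 T, f s) * Real.log T) := by
      refine biSup_finset_le (by positivity) fun t ht => ?_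
      rw [hratio t ht]
      have := le_biSup_finset (f := f) ht
      gcongr
    have hlog : -Real.log T ≤ Real.log (N * u i) := by
      rw [← Real.log_inv]
      refine Real.log_le_log (by positivity) ?_
      have := hulb i
      rw [div_le_iff₀ (by positivity)] at this
      rw [inv_le_iff_one_le_mul₀ hT0]
      linarith
    have hw8 : N * u i / (8 * Real.log T) ≤ N * u i := div_le_self hw.le (by linarith)
    refine hmain.trans (sub_le_sub ?_ ?_)
    · refine mul_le_mul_of_nonneg_left ?_ (by positivity)
      linarith
    · exact mul_le_mul_of_nonneg_left hsup (by positivity)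
  rw [sum_congr rfl hterm, sum_add_distrib, htele, sum_comm]
  have hsum := sum_le_sum fun i (_ : i ∈ univ) => hcoord i
  have htotal : ∑ i, (1 / η) * (2 * (N * u i) - 1 + Real.log T + 1 / 4)
      = (1 / η) * (N * (Real.log T + 5 / 4)) := by
    rw [← mul_sum]
    simp only [sum_add_distrib, sum_sub_distrib, ← mul_sum, hu1, sum_const, card_univ,
      Fintype.card_fin, nsmul_eq_mul]
    ring
  rw [sum_sub_distrib, htotal, ← mul_sum] at hsum
  have hη1 : 1 ≤ 1 / η := by rw [le_div_iff₀ hη0]; linarith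
  have hfinal : (N : ℝ) / 2 + (1 / η) * (N * (Real.log T + 5 / 4)) ≤ 3 * N * Real.log T / η := by
    have h1 : (N : ℝ) / 2 ≤ (1 / η) * (N / 2) := le_mul_of_one_le_left (by positivity) hη1
    have h2 : (1 / η) * (N * (7 / 4)) ≤ (1 / η) * (N * (2 * Real.log T)) := by gcongr; linarith
    have h3 : 3 * N * Real.log T / η = (1 / η) * (N * (3 * Real.log T)) := by ring
    rw [h3]
    linarith
  linarith
end

section
/- Let r ∈ ℝ^N have nonnegative coordinates, let x, u ∈ Δ_N with ⟨x, r⟩ > 0 and ⟨u, r⟩ > 0, set g = −r/⟨x, r⟩, and let 0 < β ≤ 1/2. If 2β·|⟨g, u − x⟩| ≤ 1/4, then −ln⟨x, r⟩ − (−ln⟨u, r⟩) ≤ ⟨g, x − u⟩ − (β/2)·⟨g, x − u⟩². -/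
/-- For `t ≥ 1` the logarithm is at most `sinh (log t)`. -/
theorem log_le_half_sub_inv {t : ℝ} (ht : 1 ≤ t) : Real.log t ≤ (t - t⁻¹) / 2 := by
  rw [← Real.sinh_log (by linarith)]
  exact Real.self_le_sinh_iff.2 (Real.log_nonneg ht)

theorem log_le_sub_quarter_sq {t : ℝ} (ht : 0 < t) (ht1 : t ≤ 1) :
    Real.log t ≤ (t - 1) - (t - 1) ^ 2 / 4 := by
  obtain ⟨w, hw, hw1, rfl⟩ : ∃ w : ℝ, 0 < w ∧ w ≤ 1 ∧ t = w ^ 2 :=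
    ⟨√t, Real.sqrt_pos.2 ht, Real.sqrt_le_one.2 ht1, (Real.sq_sqrt ht.le).symm⟩
  have hlog := Real.log_le_sub_one_of_pos hw
  have hfac : 0 ≤ (1 - w) ^ 2 * ((1 - w) * (3 + w)) :=
    mul_nonneg (sq_nonneg _) (mul_nonneg (by linarith) (by linarith))
  rw [Real.log_pow]
  push_cast
  nlinarith

theorem log_le_sub_sq {t β : ℝ} (ht : 0 < t) (hβ : β ≤ 1 / 2)
    (hsmall : 2 * β * |t - 1| ≤ 1 / 4) :
    Real.log t ≤ (t - 1) - β / 2 * (t - 1) ^ 2 := by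
  rcases le_total t 1 with ht1 | ht1
  · have hlog := log_le_sub_quarter_sq ht ht1
    nlinarith [sq_nonneg (t - 1)]
  · have hlog := log_le_half_sub_inv ht1
    rw [abs_of_nonneg (by linarith)] at hsmall
    have hβt : β ≤ t⁻¹ := by
      rw [← one_div, le_div_iff₀ ht]
      linarith
    have hid : (t - t⁻¹) / 2 = (t - 1) - t⁻¹ / 2 * (t - 1) ^ 2 := by
      field_simp
      ring
    nlinarith [mul_le_mul_of_nonneg_right hβt (sq_nonneg (t - 1))]

theorem sum_neg_div_mul_sub {ι : Type*} [Fintype ι] (r x u : ι → ℝ)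
    (hxr : ∑ i, x i * r i ≠ 0) :
    ∑ i, (-(r i) / ∑ j, x j * r j) * (x i - u i)
      = (∑ i, u i * r i) / (∑ i, x i * r i) - 1 := by
  rw [← div_self hxr, ← sub_div, ← Finset.sum_sub_distrib, Finset.sum_div]
  refine Finset.sum_congr rfl fun i _ => ?_
  ring

/- STATEMENT 14: the per-round inequality f(x) - f(u) ≤ ⟨g, x-u⟩ - (β/2)⟨g, x-u⟩²
   for f(x) = -ln⟨x, r⟩ and g = -r/⟨x, r⟩, under 2β|⟨g, u-x⟩| ≤ 1/4. -/

theorem per_round_inequality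
    (N : ℕ)
    (r x u : Fin N → ℝ)
    (hr : ∀ i, 0 ≤ r i)
    (hx : (∀ i, 0 ≤ x i) ∧ (∑ i, x i) = 1)
    (hu : (∀ i, 0 ≤ u i) ∧ (∑ i, u i) = 1)
    (hxr : 0 < ∑ i, x i * r i) (hur : 0 < ∑ i, u i * r i)
    (β : ℝ) (hβ0 : 0 < β) (hβ : β ≤ 1 / 2)
    (hsmall : 2 * β * |∑ i, (-(r i) / ∑ j, x j * r j) * (u i - x i)| ≤ 1 / 4) :
    -Real.log (∑ i, x i * r i) - (-Real.log (∑ i, u i * r i))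
      ≤ (∑ i, (-(r i) / ∑ j, x j * r j) * (x i - u i))
        - β / 2 * (∑ i, (-(r i) / ∑ j, x j * r j) * (x i - u i)) ^ 2 := by
  have habs : |∑ i, (-(r i) / ∑ j, x j * r j) * (u i - x i)|
      = |∑ i, (-(r i) / ∑ j, x j * r j) * (x i - u i)| := by
    rw [← abs_neg, ← Finset.sum_neg_distrib]
    simp only [← mul_neg, neg_sub]
  rw [habs, sum_neg_div_mul_sub r x u hxr.ne'] at hsmall
  rw [sum_neg_div_mul_sub r x u hxr.ne']
  have hlog := log_le_sub_sq (div_pos hur hxr) hβ hsmall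
  rw [Real.log_div hur.ne' hxr.ne'] at hlog
  linarith
end
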